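/- (Uniqueness for the Dirichlet problem.) Let F : ℝ × ℝⁿ × Sym(n) → ℝ be continuous, f, b : Ω̄ → ℝ continuous, and Ω ⊆ ℝⁿ bounded open. Assume that X ≤ Y implies F(r,p,X) ≤ F(r,p,Y), and that there is γ > 0 such that r ≤ s implies F(r,p,X) ≥ F(s,p,X) + γ(s − r). Then the Dirichlet problem F(u,Du,D²u) = f in Ω, u = b on ∂Ω, admits at most one viscosity solution u ∈ C⁰(Ω̄): if u, v ∈ C⁰(Ω̄) are both viscosity solutions of F = f on Ω with u = b = v on ∂Ω, then u = v on Ω̄. -/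

import Mathlib

/-! The comparison principle for the degenerate elliptic equation `F(u, Du, D²u) = f` gives `u ≤ v`
and, by symmetry, `v ≤ u`.

Suppose `m = u x₀ - v x₀ > 0`. Set `A z = sup_x (u x - α‖x‖² + 2α⟪x, z⟫)` and
`B z = sup_y (-v y - α‖y‖² + 2α⟪y, z⟫)`, the suprema being over `closure Ω`; up to the term `α‖z‖²`
these are the sup-convolutions of `u` and `-v`. Both are convex, and `2α` times a maximizing point
is a subgradient. For each slope `q` the function `A + B - 2α‖·‖² - ⟪q, ·⟫` has a
global maximum; the set of maximum points for `‖q‖ < δ` is `contactSet`.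

At a contact point each of `A`, `B` is squeezed between its tangent plane and a paraboloid, so the
subgradients are Lipschitz there (`subgrad_dist_le`). This has two consequences. The contact
set has positive measure, since it is mapped by a Lipschitz map onto a ball of slopes
(`measure_contactSet_ne_zero`, Jensen's lemma). By Rademacher's theorem and Lebesgue density, at
almost every contact point both subgradients are differentiable, first along the contact set and
then, by the Lipschitz bound, in the full sense (`hasFDerivAt_subgrad`). Differentiability of the
subgradient yields a second-order Taylor expansion (`taylor_of_hasFDerivAt_subgrad`), which takes
the place of Alexandrov's theorem.

At such a contact point `z`, with maximizers `x` and `y`, the expansions of `A` and `B` transfer to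
a super-jet `(p, X)` of `u` at `x` and a sub-jet `(p - q, Y)` of `v` at `y`
(`IsSupConv.J2plus`), with `X ≤ Y` by the second-order condition. For `α` large `x` and `y` are
close to each other and lie in `Ω`; as `X` and `p` stay in a compact set determined by `α`, taking
`δ` small afterwards makes the discrepancy `q` of the gradients harmless. The two viscosity
inequalities then give `γ (u x - v y) ≤ f y - f x + γ m / 4 ≤ γ m / 2`, while
`u x - v y ≥ 3 m / 4`. -/

open scoped RealInnerProductSpace
open Filter

noncomputable section

/-- The quadratic form `z ↦ ⟨Xz, z⟩` of a matrix `X` on `ℝⁿ`. -/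
def quadForm {n : ℕ} (X : Matrix (Fin n) (Fin n) ℝ) (z : EuclideanSpace ℝ (Fin n)) : ℝ :=
  ⟪Matrix.toEuclideanLin X z, z⟫

/-- Second-order super-jet `J²⁺u(x)` of `u : Ω → ℝ` at `x` (relative to the set `Ω`):
`(p,X) ∈ J²⁺u(x)` iff `X` is symmetric and
`u(x+z) ≤ u(x) + p·z + ½⟨Xz,z⟩ + o(|z|²)` as `z → 0` within `Ω`. -/
def J2plus {n : ℕ} (Ω : Set (EuclideanSpace ℝ (Fin n))) (u : EuclideanSpace ℝ (Fin n) → ℝ)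
    (x p : EuclideanSpace ℝ (Fin n)) (X : Matrix (Fin n) (Fin n) ℝ) : Prop :=
  X.IsSymm ∧
  ∀ ε > 0, ∃ δ > 0, ∀ z : EuclideanSpace ℝ (Fin n), ‖z‖ < δ → x + z ∈ Ω →
    u (x + z) ≤ u x + ⟪p, z⟫ + (1 / 2) * quadForm X z + ε * ‖z‖ ^ 2

/-- Second-order sub-jet `J²⁻u(x)` of `u : Ω → ℝ` at `x` (relative to the set `Ω`). -/
def J2minus {n : ℕ} (Ω : Set (EuclideanSpace ℝ (Fin n))) (u : EuclideanSpace ℝ (Fin n) → ℝ)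
    (x p : EuclideanSpace ℝ (Fin n)) (X : Matrix (Fin n) (Fin n) ℝ) : Prop :=
  X.IsSymm ∧
  ∀ ε > 0, ∃ δ > 0, ∀ z : EuclideanSpace ℝ (Fin n), ‖z‖ < δ → x + z ∈ Ω →
    u x + ⟪p, z⟫ + (1 / 2) * quadForm X z - ε * ‖z‖ ^ 2 ≤ u (x + z)

/-! ### Subgradients at contact points and Taylor expansions -/

section ConvexAnalysis

variable {E : Type*} [NormedAddCommGroup E] [InnerProductSpace ℝ E]

/-- `s` selects a subgradient of `A` at every point; this is how convexity of `A` is encoded. -/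
def IsSubgrad (A : E → ℝ) (s : E → E) : Prop :=
  ∀ x w, A x + ⟪s x, w - x⟫ ≤ A w

/-- The set of points at which a linear perturbation `w ↦ A w + B w - C‖w‖² - ⟪q, w⟫` of slope
`‖q‖ < δ` attains a global maximum. -/
def contactSet (A B : E → ℝ) (C δ : ℝ) : Set E :=
  {z | ∃ q : E, ‖q‖ < δ ∧ ∀ w,
    A w + B w - C * ‖w‖ ^ 2 - ⟪q, w⟫ ≤ A z + B z - C * ‖z‖ ^ 2 - ⟪q, z⟫}

lemma sq_norm_expand (z w : E) :
    ‖w‖ ^ 2 = ‖z‖ ^ 2 + 2 * ⟪z, w - z⟫ + ‖w - z‖ ^ 2 := by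
  have h := norm_add_sq_real z (w - z)
  rwa [add_sub_cancel] at h

lemma eq_zero_of_inner_le_sq {d : E} {C : ℝ} (hC : 0 < C)
    (h : ∀ k : E, ⟪d, k⟫ ≤ C * ‖k‖ ^ 2) : d = 0 := by
  -- test with `k = d / (2C)`
  have h1 := h ((1 / (2 * C)) • d)
  rw [real_inner_smul_right, norm_smul, mul_pow, real_inner_self_eq_norm_sq, Real.norm_eq_abs,
    sq_abs] at h1
  have h2 : C * ((1 / (2 * C)) ^ 2 * ‖d‖ ^ 2) = ‖d‖ ^ 2 / (4 * C) := by field_simp; ring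
  have h3 : 1 / (2 * C) * ‖d‖ ^ 2 = 2 * (‖d‖ ^ 2 / (4 * C)) := by field_simp; ring
  rw [h2, h3] at h1
  have h4 : ‖d‖ ^ 2 / (4 * C) ≤ 0 := by linarith
  have h5 : ‖d‖ ^ 2 ≤ 0 := by
    by_contra! h
    have : 0 < ‖d‖ ^ 2 / (4 * C) := by positivity
    linarith
  have h6 : ‖d‖ = 0 := by nlinarith [norm_nonneg d]
  simpa using h6

/-- First-order condition at a contact point. -/
lemma subgrad_add_eq {A B : E → ℝ} {sA sB : E → E} (hA : IsSubgrad A sA) (hB : IsSubgrad B sB)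
    {C : ℝ} (hC : 0 < C) {q z : E}
    (hz : ∀ w, A w + B w - C * ‖w‖ ^ 2 - ⟪q, w⟫ ≤ A z + B z - C * ‖z‖ ^ 2 - ⟪q, z⟫) :
    sA z + sB z = (2 * C) • z + q := by
  have key : sA z + sB z - (2 * C) • z - q = 0 := by
    refine eq_zero_of_inner_le_sq hC fun k => ?_
    have h1 := hz (z + k)
    have h2 := hA z (z + k)
    have h3 := hB z (z + k)
    have h4 := norm_add_sq_real z k
    rw [add_sub_cancel_left] at h2 h3
    simp only [inner_sub_left, inner_add_left, inner_add_right, real_inner_smul_left] at h1 ⊢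
    rw [h4] at h1
    linarith
  rw [sub_sub, sub_eq_zero] at key
  exact key

/-- At a contact point `A` lies below a paraboloid of opening `C`, since `C‖w‖² - B` is touched
there from below by `A` up to an affine function. -/
lemma contact_le_paraboloid {A B : E → ℝ} {sA sB : E → E} (hA : IsSubgrad A sA)
    (hB : IsSubgrad B sB) {C δ : ℝ} (hC : 0 < C) {z : E} (hz : z ∈ contactSet A B C δ) (w : E) :
    A w ≤ A z + ⟪sA z, w - z⟫ + C * ‖w - z‖ ^ 2 := by
  obtain ⟨q, -, hq⟩ := hz
  have h1 := subgrad_add_eq hA hB hC hq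
  have h2 := hq w
  have h3 := hB z w
  have h4 := sq_norm_expand z w
  have h5 : sA z = (2 * C) • z + q - sB z := by rw [← h1]; abel
  have h6 : ⟪q, w⟫ - ⟪q, z⟫ = ⟪q, w - z⟫ := by rw [inner_sub_right]
  rw [h5, inner_sub_left, inner_add_left, real_inner_smul_left]
  rw [h4] at h2
  linarith

/-- If a convex function lies below a paraboloid touching it at `k`, then its subgradients at
other points differ from the one at `k` by at most a multiple of the distance. -/
lemma subgrad_dist_le {A : E → ℝ} {sA : E → E} (hA : IsSubgrad A sA) {C : ℝ} (hC : 0 < C) {k : E}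
    (hk : ∀ w, A w ≤ A k + ⟪sA k, w - k⟫ + C * ‖w - k‖ ^ 2) (x : E) :
    ‖sA x - sA k‖ ≤ 4 * C * ‖x - k‖ := by
  set e := sA x - sA k with he
  set a := x - k with ha
  have h1 : ∀ d : E, ⟪e, d⟫ ≤ C * ‖a + d‖ ^ 2 := by
    intro d
    have h1 := hk (x + d)
    have h2 := hA x (x + d)
    have h3 := hA k x
    have h4 : x + d - k = a + d := by rw [ha]; abel
    rw [h4, inner_add_right] at h1
    rw [add_sub_cancel_left] at h2
    rw [he, inner_sub_left]
    linarith
  -- the choice `d = e / (4C)` balances the two sides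
  have h2 := h1 ((1 / (4 * C)) • e)
  have h3 : ‖a + (1 / (4 * C)) • e‖ ^ 2 ≤ 2 * ‖a‖ ^ 2 + 2 * ‖(1 / (4 * C)) • e‖ ^ 2 := by
    have := norm_add_le a ((1 / (4 * C)) • e)
    have h0 := norm_nonneg (a + (1 / (4 * C)) • e)
    nlinarith [sq_nonneg (‖a‖ - ‖(1 / (4 * C)) • e‖)]
  rw [norm_smul, mul_pow, Real.norm_eq_abs, sq_abs] at h3
  rw [real_inner_smul_right, real_inner_self_eq_norm_sq] at h2
  have h4 := mul_le_mul_of_nonneg_left h3 hC.le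
  have h5 : C * (2 * ‖a‖ ^ 2 + 2 * ((1 / (4 * C)) ^ 2 * ‖e‖ ^ 2))
      = 2 * C * ‖a‖ ^ 2 + 1 / (8 * C) * ‖e‖ ^ 2 := by field_simp; ring
  have h6 : 1 / (4 * C) * ‖e‖ ^ 2 = 2 * (1 / (8 * C) * ‖e‖ ^ 2) := by field_simp; ring
  have h7 : 1 / (8 * C) * ‖e‖ ^ 2 ≤ 2 * C * ‖a‖ ^ 2 := by linarith
  have h8 : ‖e‖ ^ 2 ≤ (4 * C * ‖a‖) ^ 2 := by
    have := mul_le_mul_of_nonneg_left h7 (by positivity : 0 ≤ 8 * C)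
    have h9 : 8 * C * (1 / (8 * C) * ‖e‖ ^ 2) = ‖e‖ ^ 2 := by field_simp
    nlinarith
  exact (sq_le_sq₀ (norm_nonneg _) (by positivity)).1 h8

/-- A function on `[0, 1]` whose increments are bounded above by a multiple of the squared step
does not increase. -/
lemma le_of_sq_increment {g : ℝ → ℝ} {c : ℝ}
    (h : ∀ s t, 0 ≤ s → s ≤ t → t ≤ 1 → g t - g s ≤ c * (t - s) ^ 2) : g 1 ≤ g 0 := by
  have key : ∀ m : ℕ, g 1 - g 0 ≤ c / (m + 1) := by
    intro m
    have hm : (0 : ℝ) < (m : ℝ) + 1 := by positivity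
    have h1 : ∀ i : ℕ, i ≤ m + 1 → g (i / ((m : ℝ) + 1)) - g 0 ≤ i * (c / ((m : ℝ) + 1) ^ 2) := by
      intro i
      induction i with
      | zero => simp
      | succ i ih =>
        intro hi
        have h2 := ih (by omega)
        have hi' : ((i + 1 : ℕ) : ℝ) ≤ (m : ℝ) + 1 := by exact_mod_cast hi
        have h3 := h (i / ((m : ℝ) + 1)) ((i + 1 : ℕ) / ((m : ℝ) + 1)) (by positivity)
          (by gcongr; simp) (by rw [div_le_one hm]; exact hi')
        have h4 : c * (((i + 1 : ℕ) : ℝ) / ((m : ℝ) + 1) - i / ((m : ℝ) + 1)) ^ 2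
            = c / ((m : ℝ) + 1) ^ 2 := by
          push_cast; field_simp; ring
        rw [h4] at h3
        push_cast at h3 ⊢
        linarith
    have h2 := h1 (m + 1) le_rfl
    have h3 : (((m + 1 : ℕ) : ℝ)) / ((m : ℝ) + 1) = 1 := by push_cast; field_simp
    have h4 : ((m + 1 : ℕ) : ℝ) * (c / ((m : ℝ) + 1) ^ 2) = c / (m + 1) := by
      push_cast; field_simp
    rwa [h3, h4] at h2
  have h0 : Tendsto (fun m : ℕ => c / ((m : ℝ) + 1)) atTop (nhds 0) :=
    tendsto_const_nhds.div_atTop (tendsto_atTop_add_const_right _ _ tendsto_natCast_atTop_atTop)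
  linarith [ge_of_tendsto' h0 key]

/-- A convex function whose subgradient selection is differentiable at `z` has a second-order
Taylor expansion at `z`. -/
lemma taylor_of_hasFDerivAt_subgrad {A : E → ℝ} {sA : E → E} (hA : IsSubgrad A sA)
    {H : E →L[ℝ] E} {z : E} (hH : HasFDerivAt sA H z) {ε : ℝ} (hε : 0 < ε) :
    ∃ ρ > 0, ∀ h : E, ‖h‖ < ρ →
      |A (z + h) - A z - ⟪sA z, h⟫ - 1 / 2 * ⟪H h, h⟫| ≤ ε * ‖h‖ ^ 2 := by
  rw [hasFDerivAt_iff_isLittleO_nhds_zero] at hH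
  have h1 := hH.def hε
  obtain ⟨ρ, hρ, hball⟩ := Metric.eventually_nhds_iff.1 h1
  refine ⟨ρ, hρ, fun h hh => ?_⟩
  have hs : ∀ t : ℝ, 0 ≤ t → t ≤ 1 →
      |⟪sA (z + t • h), h⟫ - ⟪sA z, h⟫ - t * ⟪H h, h⟫| ≤ ε * t * ‖h‖ ^ 2 := by
    intro t ht0 ht1
    have hn : ‖t • h‖ = t * ‖h‖ := by rw [norm_smul, Real.norm_eq_abs, abs_of_nonneg ht0]
    have h2 := @hball (t • h) (by
      rw [dist_zero_right, hn]; nlinarith [norm_nonneg h])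
    have h3 := abs_real_inner_le_norm (sA (z + t • h) - sA z - H (t • h)) h
    rw [hn] at h2
    have h4 := mul_le_mul_of_nonneg_right h2 (norm_nonneg h)
    rw [inner_sub_left, inner_sub_left, map_smul, real_inner_smul_left] at h3
    rw [map_smul] at h4
    calc _ ≤ _ := h3
      _ ≤ _ := h4
      _ = _ := by ring
  have inc : ∀ s t : ℝ, ⟪sA (z + s • h), h⟫ * (t - s) ≤ A (z + t • h) - A (z + s • h) := by
    intro s t
    have h2 := hA (z + s • h) (z + t • h)
    have h3 : z + t • h - (z + s • h) = (t - s) • h := by rw [sub_smul]; abel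
    rw [h3, real_inner_smul_right] at h2
    linarith
  have up := le_of_sq_increment (c := 1 / 2 * (⟪H h, h⟫ + ε * ‖h‖ ^ 2))
    (g := fun t => A (z + t • h) - t * ⟪sA z, h⟫ - 1 / 2 * t ^ 2 * (⟪H h, h⟫ + ε * ‖h‖ ^ 2)) (by
      intro s t h0 hst ht
      have h2 := inc t s
      have h3 := mul_le_mul_of_nonneg_right (le_of_abs_le (hs t (h0.trans hst) ht))
        (sub_nonneg.2 hst)
      nlinarith)
  have lo := le_of_sq_increment (c := 1 / 2 * (⟪H h, h⟫ - ε * ‖h‖ ^ 2))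
    (g := fun t => -(A (z + t • h) - t * ⟪sA z, h⟫ - 1 / 2 * t ^ 2 * (⟪H h, h⟫ - ε * ‖h‖ ^ 2))) (by
      intro s t h0 hst ht
      have h2 := inc s t
      have h3 := mul_le_mul_of_nonneg_right (neg_le_of_abs_le (hs s h0 (hst.trans ht)))
        (sub_nonneg.2 hst)
      nlinarith)
  simp only [one_smul, zero_smul, add_zero] at up lo
  have : 0 ≤ ε * ‖h‖ ^ 2 := by positivity
  rw [abs_le]
  constructor <;> linarith

end ConvexAnalysis

/-! ### Almost everywhere second-order differentiability on the contact set -/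

section ContactSet

open MeasureTheory
open scoped Pointwise

variable {E : Type*} [NormedAddCommGroup E] [InnerProductSpace ℝ E]

lemma lipschitzOnWith_contactSet {A B : E → ℝ} {sA sB : E → E} (hA : IsSubgrad A sA)
    (hB : IsSubgrad B sB) {C δ : ℝ} (hC : 0 < C) :
    LipschitzOnWith (4 * C).toNNReal sA (contactSet A B C δ) := by
  refine LipschitzOnWith.of_dist_le_mul fun x _ k hk => ?_
  rw [dist_eq_norm, dist_eq_norm, Real.coe_toNNReal _ (by positivity)]
  exact subgrad_dist_le hA hC (contact_le_paraboloid hA hB hC hk) x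

lemma contactSet_comm (A B : E → ℝ) (C δ : ℝ) : contactSet A B C δ = contactSet B A C δ := by
  ext z
  simp only [contactSet, Set.mem_ofPred_eq, add_comm]

variable [FiniteDimensional ℝ E] [MeasurableSpace E] [BorelSpace E]

/-- Points of a set at which the set has Lebesgue density one are approximated by the set at a
scale smaller than any fixed multiple of the distance. -/
lemma exists_near_of_density_one (μ : Measure E) [μ.IsAddHaarMeasure] {K : Set E} {z : E}
    (hz : Tendsto (fun r => μ (K ∩ Metric.closedBall z r) / μ (Metric.closedBall z r))
      (nhdsWithin 0 (Set.Ioi 0)) (nhds 1)) {η : ℝ} (hη : 0 < η) :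
    ∃ ρ > 0, ∀ h : E, ‖h‖ < ρ → h ≠ 0 → ∃ k ∈ K, ‖k - (z + h)‖ ≤ η * ‖h‖ := by
  -- density yields, for each fixed `y`, points of `K` near `z + r y`; a finite net of the unit
  -- ball makes this uniform in the direction `y`
  obtain ⟨T, hTs, hTf, hT⟩ := (isCompact_closedBall (0 : E) 1).elim_finite_subcover_image
    (b := Metric.closedBall (0 : E) 1) (c := fun y => Metric.ball y (η / 2))
    (fun _ _ => Metric.isOpen_ball)
    (fun y hy => Set.mem_biUnion hy (Metric.mem_ball_self (by positivity)))
  have h1 : ∀ᶠ r in nhdsWithin (0 : ℝ) (Set.Ioi 0), ∀ y ∈ T,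
      (K ∩ ({z} + r • Metric.ball y (η / 2))).Nonempty := by
    rw [Filter.eventually_all_finite hTf]
    intro y _
    exact Measure.eventually_nonempty_inter_smul_of_density_one μ K z hz _ measurableSet_ball
      (Metric.measure_ball_pos μ _ (by positivity)).ne'
  rw [eventually_nhdsWithin_iff, Metric.eventually_nhds_iff] at h1
  obtain ⟨ρ, hρ, h1⟩ := h1
  refine ⟨ρ, hρ, fun h hh h0 => ?_⟩
  have hpos : 0 < ‖h‖ := norm_pos_iff.2 h0
  have hunit : ‖(‖h‖⁻¹ • h)‖ = 1 := by
    rw [norm_smul, norm_inv, norm_norm, inv_mul_cancel₀ hpos.ne']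
  obtain ⟨y, hyT, hy⟩ := Set.mem_iUnion₂.1
    (hT (show ‖h‖⁻¹ • h ∈ Metric.closedBall (0 : E) 1 by simp [hunit]))
  obtain ⟨k, hkK, hk⟩ := @h1 ‖h‖ (by simpa using hh) hpos y hyT
  obtain ⟨a, ha, b, hb, rfl⟩ := Set.mem_add.1 hk
  rw [Set.mem_singleton_iff] at ha
  obtain ⟨w, hw, rfl⟩ := hb
  subst ha
  refine ⟨_, hkK, ?_⟩
  have h2 : a + ‖h‖ • w - (a + h) = ‖h‖ • ((w - y) - (‖h‖⁻¹ • h - y)) := by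
    rw [sub_sub_sub_cancel_right, smul_sub, smul_inv_smul₀ hpos.ne']; abel
  have h3 : ‖(w - y) - (‖h‖⁻¹ • h - y)‖ ≤ η := by
    have := norm_sub_le (w - y) (‖h‖⁻¹ • h - y)
    rw [Metric.mem_ball, dist_eq_norm] at hy hw
    linarith
  calc _ = ‖h‖ * ‖(w - y) - (‖h‖⁻¹ • h - y)‖ := by
        change ‖a + ‖h‖ • w - (a + h)‖ = _
        rw [h2, norm_smul, norm_norm]
    _ ≤ ‖h‖ * η := by gcongr
    _ = _ := mul_comm _ _

/-- Differentiability of the subgradient relative to the contact set upgrades to full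
differentiability at a density point. -/
lemma hasFDerivAt_subgrad {A B : E → ℝ} {sA sB : E → E} (hA : IsSubgrad A sA)
    (hB : IsSubgrad B sB) {C δ : ℝ} (hC : 0 < C) (μ : Measure E) [μ.IsAddHaarMeasure] {z : E}
    (hz : Tendsto (fun r => μ (contactSet A B C δ ∩ Metric.closedBall z r) /
      μ (Metric.closedBall z r)) (nhdsWithin 0 (Set.Ioi 0)) (nhds 1))
    {H : E →L[ℝ] E} (hH : HasFDerivWithinAt sA H (contactSet A B C δ) z) :
    HasFDerivAt sA H z := by
  rw [hasFDerivAt_iff_isLittleO_nhds_zero, Asymptotics.isLittleO_iff]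
  intro ε hε
  set L := 4 * C + ‖H‖ with hL
  have hLpos : 0 < L := by positivity
  -- `η` bounds the relative distance to the contact set; the error is `η L` from moving to the
  -- contact set plus `(1 + η) ε / 4` from the derivative along it
  set η := min 1 (ε / (2 * L)) with hη
  have hηpos : 0 < η := by positivity
  have hη1 : η ≤ 1 := min_le_left _ _
  have hηL : η * L ≤ ε / 2 := by
    calc η * L ≤ ε / (2 * L) * L := by gcongr; exact min_le_right _ _
      _ = ε / 2 := by field_simp
  obtain ⟨ρ, hρ, hnear⟩ := exists_near_of_density_one μ hz hηpos
  have h1 := (Asymptotics.isLittleO_iff.1 hH.isLittleO) (show 0 < ε / 4 by positivity)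
  rw [eventually_nhdsWithin_iff, Metric.eventually_nhds_iff] at h1
  obtain ⟨ρ', hρ', h1⟩ := h1
  rw [Metric.eventually_nhds_iff]
  refine ⟨min ρ (ρ' / 2), by positivity, fun h hh => ?_⟩
  rw [dist_zero_right, lt_min_iff] at hh
  by_cases h0 : h = 0
  · simp [h0]
  obtain ⟨k, hkK, hk⟩ := hnear h hh.1 h0
  have hkz : ‖k - z‖ ≤ 2 * ‖h‖ := by
    have h2 : k - z = (k - (z + h)) + h := by abel
    rw [h2]
    have := norm_add_le (k - (z + h)) h
    nlinarith [norm_nonneg h]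
  have h2 := @h1 k (by rw [dist_eq_norm]; linarith) hkK
  have h3 := subgrad_dist_le hA hC (contact_le_paraboloid hA hB hC hkK) (z + h)
  have h4 := H.le_opNorm (k - (z + h))
  rw [norm_sub_rev (z + h) k] at h3
  have h5 : sA (z + h) - sA z - H h
      = (sA (z + h) - sA k) + (sA k - sA z - H (k - z)) + H (k - (z + h)) := by
    simp only [map_sub, map_add]; abel
  rw [h5]
  have h6 := norm_add₃_le (a := sA (z + h) - sA k) (b := sA k - sA z - H (k - z))
    (c := H (k - (z + h)))
  have h7 : L * ‖k - (z + h)‖ ≤ ε / 2 * ‖h‖ := by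
    calc _ ≤ L * (η * ‖h‖) := by gcongr
      _ = η * L * ‖h‖ := by ring
      _ ≤ _ := by gcongr
  have h8 : ε / 4 * ‖k - z‖ ≤ ε / 2 * ‖h‖ := by nlinarith
  rw [hL] at h7
  linarith

/-- The contact set has positive measure: `sA + sB - 2C id` is Lipschitz on it and maps it onto
the ball of admissible slopes. -/
lemma measure_contactSet_ne_zero {A B : E → ℝ} {sA sB : E → E} (hA : IsSubgrad A sA)
    (hB : IsSubgrad B sB) {C δ : ℝ} (hC : 0 < C) (hδ : 0 < δ)
    (hmax : ∀ q : E, ‖q‖ < δ → ∃ z, ∀ w,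
      A w + B w - C * ‖w‖ ^ 2 - ⟪q, w⟫ ≤ A z + B z - C * ‖z‖ ^ 2 - ⟪q, z⟫) :
    μH[Module.finrank ℝ E] (contactSet A B C δ) ≠ 0 := by
  intro h0
  have hLB := lipschitzOnWith_contactSet (δ := δ) hB hA hC
  rw [contactSet_comm] at hLB
  have hL := ((lipschitzOnWith_contactSet (δ := δ) hA hB hC).add hLB).sub
    ((lipschitzWith_smul (2 * C : ℝ) (β := E)).lipschitzOnWith (s := contactSet A B C δ))
  have h1 := hL.hausdorffMeasure_image_le (d := Module.finrank ℝ E) (by positivity)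
  rw [h0, mul_zero] at h1
  have h2 : Metric.ball (0 : E) δ ⊆ (fun x => sA x + sB x - (2 * C) • x) '' contactSet A B C δ := by
    intro q hq
    rw [mem_ball_zero_iff] at hq
    obtain ⟨z, hz⟩ := hmax q hq
    refine ⟨z, ⟨q, hq, hz⟩, ?_⟩
    simp only [subgrad_add_eq hA hB hC hz, add_sub_cancel_left]
  exact (Metric.measure_ball_pos μH[Module.finrank ℝ E] (0 : E) hδ).ne'
    (le_antisymm ((measure_mono h2).trans h1) zero_le)

/-- The analytic core, combining Jensen's lemma with Alexandrov's theorem on the contact set: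
some slope `q` of norm less than `δ` has a contact point `z` at which the subgradients of both
convex functions are differentiable, so that both have a second-order Taylor expansion by
`taylor_of_hasFDerivAt_subgrad`. -/
theorem exists_contact_twice_diff {A B : E → ℝ} {sA sB : E → E} (hA : IsSubgrad A sA)
    (hB : IsSubgrad B sB) {C δ : ℝ} (hC : 0 < C) (hδ : 0 < δ)
    (hmax : ∀ q : E, ‖q‖ < δ → ∃ z, ∀ w,
      A w + B w - C * ‖w‖ ^ 2 - ⟪q, w⟫ ≤ A z + B z - C * ‖z‖ ^ 2 - ⟪q, z⟫) :
    ∃ q z : E, ‖q‖ < δ ∧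
      (∀ w, A w + B w - C * ‖w‖ ^ 2 - ⟪q, w⟫ ≤ A z + B z - C * ‖z‖ ^ 2 - ⟪q, z⟫) ∧
      ∃ HA HB : E →L[ℝ] E, HasFDerivAt sA HA z ∧ HasFDerivAt sB HB z := by
  set K := contactSet A B C δ with hK
  set μ : Measure E := μH[Module.finrank ℝ E] with hμ
  have hpos : μ K ≠ 0 := measure_contactSet_ne_zero hA hB hC hδ hmax
  have hLA := lipschitzOnWith_contactSet (δ := δ) hA hB hC
  have hLB := lipschitzOnWith_contactSet (δ := δ) hB hA hC
  rw [contactSet_comm] at hLB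
  have ae1 : ∀ᵐ x ∂μ, x ∈ K → DifferentiableWithinAt ℝ sA K x :=
    hLA.ae_differentiableWithinAt_of_mem
  have ae2 : ∀ᵐ x ∂μ, x ∈ K → DifferentiableWithinAt ℝ sB K x :=
    hLB.ae_differentiableWithinAt_of_mem
  have ae3 := ae_imp_of_ae_restrict (Besicovitch.ae_tendsto_measure_inter_div μ K)
  obtain ⟨z, hzK, h1, h2, h3⟩ : ∃ z ∈ K, DifferentiableWithinAt ℝ sA K z ∧
      DifferentiableWithinAt ℝ sB K z ∧
      Tendsto (fun r => μ (K ∩ Metric.closedBall z r) / μ (Metric.closedBall z r))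
        (nhdsWithin 0 (Set.Ioi 0)) (nhds 1) := by
    by_contra! hcon
    refine hpos (measure_eq_zero_iff_ae_notMem.2 ?_)
    filter_upwards [ae1, ae2, ae3] with x h1 h2 h3 hx
    exact hcon x hx (h1 hx) (h2 hx) (h3 hx)
  obtain ⟨q, hq, hz⟩ := hzK
  refine ⟨q, z, hq, hz, _, _, hasFDerivAt_subgrad hA hB hC μ h3 h1.hasFDerivWithinAt,
    hasFDerivAt_subgrad (δ := δ) hB hA hC μ ?_ (H := fderivWithin ℝ sB K z) ?_⟩
  · rw [contactSet_comm]; exact h3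
  · rw [contactSet_comm]; exact h2.hasFDerivWithinAt

end ContactSet

/-! ### Second-order bounds -/

section SecondOrderBounds

variable {E : Type*} [NormedAddCommGroup E] [InnerProductSpace ℝ E]

lemma quadratic_nonneg_of_near_zero {Q : E → ℝ} (hQ : ∀ (t : ℝ) h, Q (t • h) = t ^ 2 * Q h)
    (hnear : ∀ ε > 0, ∃ ρ > 0, ∀ h : E, ‖h‖ < ρ → 0 ≤ Q h + ε * ‖h‖ ^ 2) (h : E) : 0 ≤ Q h := by
  have key : ∀ ε > 0, 0 ≤ Q h + ε * ‖h‖ ^ 2 := by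
    intro ε hε
    obtain ⟨ρ, hρ, hn⟩ := hnear ε hε
    have ht : 0 < ρ / (‖h‖ + 1) := by positivity
    have h1 := hn ((ρ / (‖h‖ + 1)) • h) (by
      rw [norm_smul, Real.norm_eq_abs, abs_of_pos ht, div_mul_eq_mul_div, div_lt_iff₀ (by positivity)]
      linarith)
    rw [hQ, norm_smul, mul_pow, Real.norm_eq_abs, sq_abs] at h1
    have h2 : 0 ≤ (ρ / (‖h‖ + 1)) ^ 2 * (Q h + ε * ‖h‖ ^ 2) := by linarith
    exact nonneg_of_mul_nonneg_right h2 (by positivity)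
  by_contra! hneg
  have h1 := key (-Q h / (2 * (‖h‖ ^ 2 + 1))) (by apply div_pos <;> [linarith; positivity])
  have h2 : -Q h / (2 * (‖h‖ ^ 2 + 1)) * ‖h‖ ^ 2 ≤ -Q h / 2 := by
    rw [div_mul_eq_mul_div, div_le_div_iff₀ (by positivity) (by positivity)]
    nlinarith
  linarith

lemma inner_smul_smul_sq (H : E →L[ℝ] E) (t : ℝ) (h : E) :
    ⟪H (t • h), t • h⟫ = t ^ 2 * ⟪H h, h⟫ := by
  rw [map_smul, real_inner_smul_left, real_inner_smul_right]; ring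

lemma deriv_subgrad_nonneg {A : E → ℝ} {sA : E → E} (hA : IsSubgrad A sA)
    {H : E →L[ℝ] E} {z : E} (hH : HasFDerivAt sA H z) (h : E) : 0 ≤ ⟪H h, h⟫ := by
  have := quadratic_nonneg_of_near_zero (Q := fun h => 1 / 2 * ⟪H h, h⟫)
    (fun t h => by rw [inner_smul_smul_sq]; ring)
    (fun ε hε => by
      obtain ⟨ρ, hρ, ht⟩ := taylor_of_hasFDerivAt_subgrad hA hH hε
      refine ⟨ρ, hρ, fun h hh => ?_⟩
      have h1 := le_of_abs_le (ht h hh)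
      have h2 := hA z (z + h)
      rw [add_sub_cancel_left] at h2
      linarith) h
  linarith

/-- Second-order condition at a contact point. -/
lemma deriv_subgrad_add_le {A B : E → ℝ} {sA sB : E → E} (hA : IsSubgrad A sA)
    (hB : IsSubgrad B sB) {C : ℝ} (hC : 0 < C) {q z : E}
    (hz : ∀ w, A w + B w - C * ‖w‖ ^ 2 - ⟪q, w⟫ ≤ A z + B z - C * ‖z‖ ^ 2 - ⟪q, z⟫)
    {HA HB : E →L[ℝ] E} (hHA : HasFDerivAt sA HA z) (hHB : HasFDerivAt sB HB z) (h : E) :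
    ⟪HA h, h⟫ + ⟪HB h, h⟫ ≤ 2 * C * ‖h‖ ^ 2 := by
  have := quadratic_nonneg_of_near_zero
    (Q := fun h => C * ‖h‖ ^ 2 - 1 / 2 * ⟪HA h, h⟫ - 1 / 2 * ⟪HB h, h⟫)
    (fun t h => by
      rw [inner_smul_smul_sq, inner_smul_smul_sq, norm_smul, mul_pow, Real.norm_eq_abs, sq_abs]
      ring)
    (fun ε hε => by
      obtain ⟨ρ, hρ, ht⟩ := taylor_of_hasFDerivAt_subgrad hA hHA (half_pos hε)
      obtain ⟨ρ', hρ', ht'⟩ := taylor_of_hasFDerivAt_subgrad hB hHB (half_pos hε)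
      refine ⟨min ρ ρ', by positivity, fun h hh => ?_⟩
      rw [lt_min_iff] at hh
      have h1 := neg_le_of_abs_le (ht h hh.1)
      have h2 := neg_le_of_abs_le (ht' h hh.2)
      have h3 := hz (z + h)
      have h4 := norm_add_sq_real z h
      have h5 : ⟪sA z, h⟫ + ⟪sB z, h⟫ = 2 * C * ⟪z, h⟫ + ⟪q, h⟫ := by
        rw [← inner_add_left, subgrad_add_eq hA hB hC hz, inner_add_left, real_inner_smul_left]
      rw [h4, inner_add_right] at h3
      linarith) h
  linarith

end SecondOrderBounds

/-! ### Sup-convolutions -/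

section SupConvolution

variable {E : Type*} [NormedAddCommGroup E] [InnerProductSpace ℝ E]

/-- `A z = sup_{x ∈ D} (g x - α‖x‖² + 2α⟪x, z⟫)`, with the supremum attained at `X z`. Equivalently
`A - α‖·‖²` is the sup-convolution `sup_{x ∈ D} (g x - α‖x - ·‖²)`. -/
structure IsSupConv (D : Set E) (g : E → ℝ) (α : ℝ) (A : E → ℝ) (X : E → E) : Prop where
  mem : ∀ z, X z ∈ D
  eq : ∀ z, A z = g (X z) - α * ‖X z‖ ^ 2 + 2 * α * ⟪X z, z⟫
  le : ∀ z, ∀ x ∈ D, g x - α * ‖x‖ ^ 2 + 2 * α * ⟪x, z⟫ ≤ A z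

lemma exists_isSupConv {D : Set E} (hD : IsCompact D) (hne : D.Nonempty) {g : E → ℝ}
    (hg : ContinuousOn g D) (α : ℝ) : ∃ A X, IsSupConv D g α A X := by
  have h : ∀ z, ∃ x ∈ D, IsMaxOn (fun x => g x - α * ‖x‖ ^ 2 + 2 * α * ⟪x, z⟫) D x := fun z =>
    hD.exists_isMaxOn hne (by fun_prop)
  choose X hX hmax using h
  exact ⟨_, X, hX, fun _ => rfl, fun z x hx => hmax z hx⟩

lemma IsSupConv.isSubgrad {D : Set E} {g : E → ℝ} {α : ℝ} {A : E → ℝ} {X : E → E}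
    (h : IsSupConv D g α A X) : IsSubgrad A (fun z => (2 * α) • X z) := by
  intro z w
  have h1 := h.le w _ (h.mem z)
  rw [h.eq z, real_inner_smul_left, inner_sub_right]
  linarith

/-- Completing the square in `w`. -/
lemma complete_square {α : ℝ} (hα : 0 < α) (s q w : E) :
    2 * α * ⟪s, w⟫ - 2 * α * ‖w‖ ^ 2 - ⟪q, w⟫ =
      2 * α * ‖(1 / 2 : ℝ) • s - (1 / (4 * α)) • q‖ ^ 2
        - 2 * α * ‖w - ((1 / 2 : ℝ) • s - (1 / (4 * α)) • q)‖ ^ 2 := by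
  rw [norm_sub_sq_real w, inner_sub_right, real_inner_smul_right, real_inner_smul_right,
    real_inner_comm s w, real_inner_comm q w]
  field_simp
  ring

/-- For every slope a global maximum exists: the maximum over `w` is explicit and what remains is
a continuous function on the compact set `D × D`. -/
lemma IsSupConv.exists_contact {D : Set E} (hD : IsCompact D) (hne : D.Nonempty) {g k : E → ℝ}
    (hg : ContinuousOn g D) (hk : ContinuousOn k D) {α : ℝ} (hα : 0 < α) {A B : E → ℝ}
    {X Y : E → E} (hA : IsSupConv D g α A X) (hB : IsSupConv D k α B Y) (q : E) :
    ∃ z, ∀ w, A w + B w - 2 * α * ‖w‖ ^ 2 - ⟪q, w⟫ ≤ A z + B z - 2 * α * ‖z‖ ^ 2 - ⟪q, z⟫ := by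
  set ζ : E × E → E := fun p => (1 / 2 : ℝ) • (p.1 + p.2) - (1 / (4 * α)) • q with hζ
  set Ψ : E × E → ℝ := fun p => g p.1 - α * ‖p.1‖ ^ 2 + (k p.2 - α * ‖p.2‖ ^ 2)
    + 2 * α * ‖ζ p‖ ^ 2 with hΨ
  have hcont : ContinuousOn Ψ (D ×ˢ D) := by
    have h1 : ContinuousOn (fun p : E × E => g p.1) (D ×ˢ D) :=
      hg.comp continuousOn_fst fun p hp => hp.1
    have h2 : ContinuousOn (fun p : E × E => k p.2) (D ×ˢ D) :=
      hk.comp continuousOn_snd fun p hp => hp.2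
    have h3 : Continuous fun p : E × E => α * ‖p.1‖ ^ 2 := by fun_prop
    have h4 : Continuous fun p : E × E => α * ‖p.2‖ ^ 2 := by fun_prop
    have h5 : Continuous fun p : E × E => 2 * α * ‖ζ p‖ ^ 2 := by fun_prop
    exact ((h1.sub h3.continuousOn).add (h2.sub h4.continuousOn)).add h5.continuousOn
  obtain ⟨p, hp, hmax⟩ := (hD.prod hD).exists_isMaxOn (hne.prod hne) hcont
  refine ⟨ζ p, fun w => ?_⟩
  have h1 : Ψ (X w, Y w) ≤ Ψ p := hmax (Set.mk_mem_prod (hA.mem w) (hB.mem w))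
  have h2 := complete_square hα (X w + Y w) q w
  have h3 := complete_square hα (p.1 + p.2) q (ζ p)
  have h4 := hA.le (ζ p) p.1 hp.1
  have h5 := hB.le (ζ p) p.2 hp.2
  have h6 : 0 ≤ 2 * α * ‖w - ((1 / 2 : ℝ) • (X w + Y w) - (1 / (4 * α)) • q)‖ ^ 2 := by positivity
  rw [hA.eq w, hB.eq w]
  simp only [hΨ, hζ, sub_self, norm_zero, inner_add_left] at h1 h2 h3 h4 h5 ⊢
  linarith

end SupConvolution

/-! ### Quadratic forms and symmetric matrices -/

section Matrices

variable {n : ℕ}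

lemma quadForm_add (X Y : Matrix (Fin n) (Fin n) ℝ) (z : EuclideanSpace ℝ (Fin n)) :
    quadForm (X + Y) z = quadForm X z + quadForm Y z := by
  simp [quadForm, inner_add_left]

lemma quadForm_smul (c : ℝ) (X : Matrix (Fin n) (Fin n) ℝ) (z : EuclideanSpace ℝ (Fin n)) :
    quadForm (c • X) z = c * quadForm X z := by
  simp [quadForm, real_inner_smul_left]

lemma quadForm_sub (X Y : Matrix (Fin n) (Fin n) ℝ) (z : EuclideanSpace ℝ (Fin n)) :
    quadForm (X - Y) z = quadForm X z - quadForm Y z := by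
  simp [quadForm, inner_sub_left]

lemma quadForm_neg (X : Matrix (Fin n) (Fin n) ℝ) (z : EuclideanSpace ℝ (Fin n)) :
    quadForm (-X) z = -quadForm X z := by
  simp [quadForm]

lemma quadForm_one (z : EuclideanSpace ℝ (Fin n)) :
    quadForm (1 : Matrix (Fin n) (Fin n) ℝ) z = ‖z‖ ^ 2 := by
  simp [quadForm]

lemma quadForm_eq_dotProduct (X : Matrix (Fin n) (Fin n) ℝ) (z : EuclideanSpace ℝ (Fin n)) :
    quadForm X z = z.ofLp ⬝ᵥ X.mulVec z.ofLp := by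
  simp [quadForm, EuclideanSpace.inner_eq_star_dotProduct]

lemma quadForm_transpose (X : Matrix (Fin n) (Fin n) ℝ) (z : EuclideanSpace ℝ (Fin n)) :
    quadForm X.transpose z = quadForm X z := by
  rw [quadForm_eq_dotProduct, quadForm_eq_dotProduct, Matrix.mulVec_transpose,
    dotProduct_comm, Matrix.dotProduct_mulVec]

/-- The symmetric part of a linear map, as a matrix. -/
lemma exists_symm_matrix (H : EuclideanSpace ℝ (Fin n) →L[ℝ] EuclideanSpace ℝ (Fin n)) :
    ∃ S : Matrix (Fin n) (Fin n) ℝ, S.IsSymm ∧ ∀ h, quadForm S h = ⟪H h, h⟫ := by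
  set M : Matrix (Fin n) (Fin n) ℝ := Matrix.toEuclideanLin.symm
    (H : EuclideanSpace ℝ (Fin n) →ₗ[ℝ] EuclideanSpace ℝ (Fin n)) with hM
  have hMH : ∀ h, quadForm M h = ⟪H h, h⟫ := by
    intro h; simp [quadForm, hM]
  refine ⟨(1 / 2 : ℝ) • (M + M.transpose), ?_, fun h => ?_⟩
  · simp [Matrix.IsSymm, add_comm]
  · rw [quadForm_smul, quadForm_add, quadForm_transpose, hMH]; ring

lemma posSemidef_of_quadForm {X : Matrix (Fin n) (Fin n) ℝ} (hX : X.IsSymm)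
    (h : ∀ z, 0 ≤ quadForm X z) : X.PosSemidef := by
  refine Matrix.PosSemidef.of_dotProduct_mulVec_nonneg ?_ fun x => ?_
  · simpa [Matrix.IsHermitian] using hX.eq
  · have := h (WithLp.toLp 2 x)
    rw [quadForm_eq_dotProduct] at this
    simpa using this

/-- Polarization: a bound on the quadratic form bounds the entries of a symmetric matrix. -/
lemma abs_entry_le {X : Matrix (Fin n) (Fin n) ℝ} (hX : X.IsSymm) {c : ℝ}
    (h : ∀ z, |quadForm X z| ≤ c * ‖z‖ ^ 2) (i j : Fin n) : |X i j| ≤ c := by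
  set a : EuclideanSpace ℝ (Fin n) := EuclideanSpace.single i 1
  set b : EuclideanSpace ℝ (Fin n) := EuclideanSpace.single j 1
  have h1 := h (a + b)
  have h2 := h (a - b)
  have ha : ‖a‖ = 1 := by simp [a]
  have hb : ‖b‖ = 1 := by simp [b]
  have h3 : quadForm X (a + b) - quadForm X (a - b) = 4 * X i j := by
    have hs : X j i = X i j := hX.apply i j
    rw [quadForm_eq_dotProduct, quadForm_eq_dotProduct]
    simp [a, b, add_dotProduct, sub_dotProduct, Matrix.mulVec_add, Matrix.mulVec_sub, hs]
    ring
  rw [norm_add_sq_real, ha, hb, abs_le] at h1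
  rw [norm_sub_sq_real, ha, hb, abs_le] at h2
  rw [abs_le]
  constructor <;> linarith

end Matrices

/-! ### Jets of sup-convolutions and the comparison principle -/

section Comparison

variable {n : ℕ}

lemma J2minus_of_J2plus_neg {Ω : Set (EuclideanSpace ℝ (Fin n))}
    {v : EuclideanSpace ℝ (Fin n) → ℝ} {x p : EuclideanSpace ℝ (Fin n)}
    {X : Matrix (Fin n) (Fin n) ℝ} (h : J2plus Ω (fun y => -v y) x p X) :
    J2minus Ω v x (-p) (-X) := by
  refine ⟨?_, fun ε hε => ?_⟩
  · have := h.1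
    simpa [Matrix.IsSymm] using this.eq
  · obtain ⟨ρ, hρ, hh⟩ := h.2 ε hε
    refine ⟨ρ, hρ, fun z hz hzΩ => ?_⟩
    have h1 := hh z hz hzΩ
    rw [quadForm_neg, inner_neg_left]
    linarith

/-- The second-order Taylor polynomial of the sup-convolution at `z` is a super-jet of the original
function at the maximizer `X z`: translating `X z` and `z` by the same `h` keeps the penalty
`α‖X z - z‖²` fixed. -/
lemma IsSupConv.J2plus {Ω D : Set (EuclideanSpace ℝ (Fin n))} (hΩD : Ω ⊆ D)
    {g : EuclideanSpace ℝ (Fin n) → ℝ} {α : ℝ} {A : EuclideanSpace ℝ (Fin n) → ℝ}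
    {X : EuclideanSpace ℝ (Fin n) → EuclideanSpace ℝ (Fin n)} (hA : IsSupConv D g α A X)
    {z : EuclideanSpace ℝ (Fin n)} {H : EuclideanSpace ℝ (Fin n) →L[ℝ] EuclideanSpace ℝ (Fin n)}
    (hH : HasFDerivAt (fun z => (2 * α) • X z) H z) {S : Matrix (Fin n) (Fin n) ℝ}
    (hS : S.IsSymm) (hSH : ∀ h, quadForm S h = ⟪H h, h⟫) :
    J2plus Ω g (X z) ((2 * α) • (X z - z)) (S - (2 * α) • 1) := by
  refine ⟨hS.sub (Matrix.isSymm_one.smul _), fun ε hε => ?_⟩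
  obtain ⟨ρ, hρ, ht⟩ := taylor_of_hasFDerivAt_subgrad hA.isSubgrad hH hε
  refine ⟨ρ, hρ, fun h hh hhΩ => ?_⟩
  have h1 := le_of_abs_le (ht h hh)
  have h2 := hA.le (z + h) _ (hΩD hhΩ)
  have h3 := hA.eq z
  rw [quadForm_sub, quadForm_smul, quadForm_one, hSH, real_inner_smul_left, inner_sub_left]
  rw [real_inner_smul_left] at h1
  rw [norm_add_sq_real, inner_add_right, inner_add_left, inner_add_left,
    real_inner_self_eq_norm_sq, real_inner_comm z h] at h2
  linarith

/-- Uniform continuity of `F` in the gradient variable on bounded sets. -/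
lemma exists_gradient_modulus
    {F : ℝ × EuclideanSpace ℝ (Fin n) × Matrix (Fin n) (Fin n) ℝ → ℝ} (hF : Continuous F)
    (M P c : ℝ) {κ : ℝ} (hκ : 0 < κ) :
    ∃ δ > 0, ∀ q : EuclideanSpace ℝ (Fin n), ‖q‖ < δ → ∀ r p X, |r| ≤ M → ‖p‖ ≤ P →
      (∀ i j, |X i j| ≤ c) → F (r, p, X) < F (r, p - q, X) + κ := by
  have hmat : IsCompact {X : Matrix (Fin n) (Fin n) ℝ | ∀ i j, |X i j| ≤ c} := by
    have h1 : IsCompact (X := Matrix (Fin n) (Fin n) ℝ)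
        (Set.univ.pi fun _ : Fin n => Set.univ.pi fun _ : Fin n => Set.Icc (-c) c) :=
      isCompact_univ_pi fun _ => isCompact_univ_pi fun _ => isCompact_Icc
    refine (congrArg (IsCompact (X := Matrix (Fin n) (Fin n) ℝ)) (Set.ext fun X => ?_)).mpr h1
    simp only [Set.mem_ofPred_eq, abs_le]
    exact ⟨fun h i _ j _ => h i j, fun h i j => h i trivial j trivial⟩
  have hK : IsCompact (Set.Icc (-M) M ×ˢ Metric.closedBall (0 : EuclideanSpace ℝ (Fin n)) P ×ˢ
      {X : Matrix (Fin n) (Fin n) ℝ | ∀ i j, |X i j| ≤ c}) :=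
    isCompact_Icc.prod ((isCompact_closedBall _ _).prod hmat)
  have h := hK.eventually_forall_of_forall_eventually (x₀ := (0 : EuclideanSpace ℝ (Fin n)))
    (P := fun q y => F (y.1, y.2.1, y.2.2) < F (y.1, y.2.1 - q, y.2.2) + κ) (by
      intro y _
      refine ContinuousAt.eventually_lt ?_ ?_ ?_
      · exact Continuous.continuousAt (by fun_prop)
      · exact Continuous.continuousAt (by fun_prop)
      · simpa using hκ)
  obtain ⟨δ, hδ, hh⟩ := Metric.eventually_nhds_iff.1 h
  refine ⟨δ, hδ, fun q hq r p X hr hp hX => ?_⟩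
  exact @hh q (by simpa using hq) (r, p, X)
    ⟨abs_le.1 hr, by simpa using hp, hX⟩

/-- Comparison principle: a subsolution lies below a supersolution with the same boundary
values. -/
theorem comparison (Ω : Set (EuclideanSpace ℝ (Fin n)))
    (hΩo : IsOpen Ω) (hΩb : Bornology.IsBounded Ω)
    (F : ℝ × EuclideanSpace ℝ (Fin n) × Matrix (Fin n) (Fin n) ℝ → ℝ)
    (hFc : Continuous F)
    (hFell : ∀ r p X Y, Matrix.IsSymm X → Matrix.IsSymm Y → (Y - X).PosSemidef →
      F (r, p, X) ≤ F (r, p, Y))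
    (γ : ℝ) (hγ : 0 < γ)
    (hFmono : ∀ r s p X, r ≤ s → F (s, p, X) + γ * (s - r) ≤ F (r, p, X))
    (f u v : EuclideanSpace ℝ (Fin n) → ℝ) (hf : ContinuousOn f (closure Ω))
    (hu : ContinuousOn u (closure Ω)) (hv : ContinuousOn v (closure Ω))
    (husub : ∀ x ∈ Ω, ∀ p X, J2plus Ω u x p X → f x ≤ F (u x, p, X))
    (hvsup : ∀ x ∈ Ω, ∀ p X, J2minus Ω v x p X → F (v x, p, X) ≤ f x)
    (huv : ∀ x ∈ frontier Ω, u x = v x) :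
    ∀ x ∈ closure Ω, u x ≤ v x := by
  by_contra! hcon
  obtain ⟨x₀, hx₀, hlt⟩ := hcon
  set D := closure Ω with hDdef
  have hD : IsCompact D := hΩb.isCompact_closure
  have hne : D.Nonempty := ⟨x₀, hx₀⟩
  have hfront : ∀ x ∈ D, x ∉ Ω → u x = v x := fun x hx hxΩ =>
    huv x (by rw [hΩo.frontier_eq]; exact ⟨hx, hxΩ⟩)
  set m := u x₀ - v x₀ with hm
  have hmpos : 0 < m := sub_pos.2 hlt
  obtain ⟨R, hR⟩ := hD.isBounded.exists_norm_le
  have hR0 : 0 ≤ R := (norm_nonneg _).trans (hR x₀ hx₀)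
  obtain ⟨M₁, hM₁⟩ := hD.exists_bound_of_continuousOn hu
  obtain ⟨M₂, hM₂⟩ := hD.exists_bound_of_continuousOn hv
  set M := max M₁ M₂ with hM
  have huM : ∀ x ∈ D, |u x| ≤ M := fun x hx => (hM₁ x hx).trans (le_max_left _ _)
  have hvM : ∀ x ∈ D, |v x| ≤ M := fun x hx => (hM₂ x hx).trans (le_max_right _ _)
  have hM0 : 0 ≤ M := (abs_nonneg _).trans (huM x₀ hx₀)
  have modulus : ∀ g : EuclideanSpace ℝ (Fin n) → ℝ, ContinuousOn g D → ∀ κ > 0,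
      ∃ η > 0, ∀ x ∈ D, ∀ y ∈ D, ‖x - y‖ < η → |g x - g y| < κ := by
    intro g hg κ hκ
    obtain ⟨η, hη, h⟩ := Metric.uniformContinuousOn_iff.1
      (hD.uniformContinuousOn_of_continuous hg) κ hκ
    refine ⟨η, hη, fun x hx y hy hxy => ?_⟩
    have := h x hx y hy (by rwa [dist_eq_norm])
    rwa [Real.dist_eq] at this
  obtain ⟨η₁, hη₁, hmu⟩ := modulus u hu (m / 4) (by positivity)
  obtain ⟨η₂, hη₂, hmv⟩ := modulus v hv (m / 4) (by positivity)
  obtain ⟨η₃, hη₃, hmf⟩ := modulus f hf (γ * m / 4) (by positivity)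
  set η := min η₁ (min η₂ η₃) with hη
  have hηpos : 0 < η := by positivity
  -- `α` is large enough that `α / 2 * ‖x - y‖ ^ 2 ≤ 2 * M` forces `‖x - y‖ < η`
  set α := (4 * M + 1) / η ^ 2 with hα
  have hαpos : 0 < α := by positivity
  obtain ⟨δF, hδF, hF⟩ := exists_gradient_modulus hFc M (2 * α * (2 * R + 1)) (2 * α)
    (show 0 < γ * m / 4 by positivity)
  -- `δ ≤ 4 * α` keeps contact points within distance `1` of the midpoint of `x` and `y`, and
  -- `δ * (2 * R + 1) ≤ m / 4` bounds the effect of the linear perturbation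
  set δ := min δF (min (4 * α) (m / (4 * (2 * R + 1)))) with hδ
  have hδpos : 0 < δ := by positivity
  have hδ1 : δ ≤ 4 * α := (min_le_right _ _).trans (min_le_left _ _)
  have hδ2 : δ * (2 * R + 1) ≤ m / 4 := by
    have h1 : δ ≤ m / (4 * (2 * R + 1)) := (min_le_right _ _).trans (min_le_right _ _)
    calc _ ≤ m / (4 * (2 * R + 1)) * (2 * R + 1) := by gcongr
      _ = m / 4 := by field_simp
  have hv' : ContinuousOn (fun y => -v y) D := hv.neg
  obtain ⟨A, X, hA⟩ := exists_isSupConv hD hne hu α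
  obtain ⟨B, Y, hB⟩ := exists_isSupConv hD hne hv' α
  obtain ⟨q, z, hq, hz, HA, HB, hHA, hHB⟩ := exists_contact_twice_diff hA.isSubgrad hB.isSubgrad
    (show 0 < 2 * α by positivity) hδpos
    (fun q _ => hA.exists_contact hD hne hu hv' hαpos hB q)
  have hgrad := subgrad_add_eq hA.isSubgrad hB.isSubgrad (by positivity) hz
  have hsum := deriv_subgrad_add_le hA.isSubgrad hB.isSubgrad (by positivity) hz hHA hHB
  have hHA0 := deriv_subgrad_nonneg hA.isSubgrad hHA
  have hHB0 := deriv_subgrad_nonneg hB.isSubgrad hHB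
  have hxD := hA.mem z
  have hyD := hB.mem z
  have hAz := hA.eq z
  have hBz := hB.eq z
  obtain ⟨SA, hSA, hSAH⟩ := exists_symm_matrix HA
  obtain ⟨SB, hSB, hSBH⟩ := exists_symm_matrix HB
  have jetA := fun (h : Ω ⊆ D) => hA.J2plus h hHA hSA hSAH
  have jetB := fun (h : Ω ⊆ D) => J2minus_of_J2plus_neg (hB.J2plus h hHB hSB hSBH)
  set x := X z with hx
  set y := Y z with hy
  -- location of `z`
  have hzmid : z = (1 / 2 : ℝ) • (x + y) - (1 / (4 * α)) • q := by
    have h1 : q = (2 * α) • x + (2 * α) • y - (2 * (2 * α)) • z := by rw [hgrad]; abel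
    rw [h1]
    match_scalars <;> field_simp <;> ring
  have hqα : ‖(1 / (4 * α)) • q‖ ≤ 1 := by
    rw [norm_smul, Real.norm_eq_abs, abs_of_pos (by positivity), div_mul_eq_mul_div, one_mul,
      div_le_one (by positivity)]
    linarith
  have hznorm : ‖z‖ ≤ R + 1 := by
    rw [hzmid]
    have h1 := norm_sub_le ((1 / 2 : ℝ) • (x + y)) ((1 / (4 * α)) • q)
    have h2 : ‖(1 / 2 : ℝ) • (x + y)‖ ≤ R := by
      rw [norm_smul, Real.norm_eq_abs, abs_of_pos (by norm_num)]
      linarith [norm_add_le x y, hR x hxD, hR y hyD]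
    linarith
  -- comparison of the maximum with the value at `x₀`
  have hqin : ⟪q, x₀⟫ - ⟪q, z⟫ ≤ m / 4 := by
    rw [← inner_sub_right]
    have h1 := real_inner_le_norm q (x₀ - z)
    have h2 : ‖x₀ - z‖ ≤ 2 * R + 1 := by linarith [norm_sub_le x₀ z, hR x₀ hx₀]
    calc _ ≤ _ := h1
      _ ≤ δ * (2 * R + 1) := by gcongr
      _ ≤ _ := hδ2
  have hgap : 3 * m / 4 + α / 2 * ‖x - y‖ ^ 2 ≤ u x - v y := by
    have h1 := hz x₀
    have h2 := hA.le x₀ x₀ hx₀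
    have h3 := hB.le x₀ x₀ hx₀
    rw [real_inner_self_eq_norm_sq] at h2 h3
    have h4 : ‖x - y‖ ^ 2 ≤ 2 * (‖x - z‖ ^ 2 + ‖y - z‖ ^ 2) := by
      have h5 := norm_sub_le (x - z) (y - z)
      rw [sub_sub_sub_cancel_right] at h5
      nlinarith [norm_nonneg (x - y), sq_nonneg (‖x - z‖ - ‖y - z‖)]
    rw [norm_sub_sq_real x z, norm_sub_sq_real y z] at h4
    have h6 := mul_le_mul_of_nonneg_left h4 hαpos.le
    rw [hAz, hBz] at h1
    linarith
  have hxy : ‖x - y‖ < η := by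
    have h1 := (abs_le.1 (huM x hxD)).2
    have h2 := (abs_le.1 (hvM y hyD)).1
    have h3 : α * ‖x - y‖ ^ 2 < α * η ^ 2 := by
      have : α * η ^ 2 = 4 * M + 1 := by rw [hα]; field_simp
      rw [this]; linarith
    exact lt_of_pow_lt_pow_left₀ 2 hηpos.le (lt_of_mul_lt_mul_left h3 hαpos.le)
  have hgap' : 3 * m / 4 ≤ u x - v y := by
    have : 0 ≤ α / 2 * ‖x - y‖ ^ 2 := by positivity
    linarith
  have hxΩ : x ∈ Ω := by
    by_contra hxΩ
    have h1 := hfront x hxD hxΩ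
    have h2 := hmv x hxD y hyD (hxy.trans_le ((min_le_right _ _).trans (min_le_left _ _)))
    linarith [(abs_lt.1 h2).2]
  have hyΩ : y ∈ Ω := by
    by_contra hyΩ
    have h1 := hfront y hyD hyΩ
    have h2 := hmu x hxD y hyD (hxy.trans_le (min_le_left _ _))
    linarith [(abs_lt.1 h2).2]
  -- the two viscosity inequalities
  have jA := jetA subset_closure
  have jB := jetB subset_closure
  have hsub := husub x hxΩ _ _ jA
  have hsup := hvsup y hyΩ _ _ jB
  have hp : -((2 * α) • (y - z)) = (2 * α) • (x - z) - q := by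
    have h1 : q = (2 * α) • x + (2 * α) • y - (2 * (2 * α)) • z := by rw [hgrad]; abel
    rw [h1]
    match_scalars <;> ring
  rw [hp] at hsup
  have hell := hFell (v y) ((2 * α) • (x - z) - q) _ _ jA.1 jB.1
    (posSemidef_of_quadForm (jB.1.sub jA.1) fun h => by
      have := hsum h
      simp only [quadForm_sub, quadForm_neg, quadForm_smul, quadForm_one, hSAH, hSBH]
      linarith)
  have hmono := hFmono (v y) (u x) ((2 * α) • (x - z)) (SA - (2 * α) • 1) (by linarith)
  have hentry := abs_entry_le jA.1 (c := 2 * α) (fun h => by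
    have h1 := hsum h
    have h2 := hHA0 h
    have h3 := hHB0 h
    rw [quadForm_sub, quadForm_smul, quadForm_one, hSAH, abs_le]
    constructor <;> linarith)
  have hpnorm : ‖(2 * α) • (x - z)‖ ≤ 2 * α * (2 * R + 1) := by
    rw [norm_smul, Real.norm_eq_abs, abs_of_pos (by positivity)]
    gcongr
    linarith [norm_sub_le x z, hR x hxD]
  have hFq := hF q (hq.trans_le (min_le_left _ _)) (v y) ((2 * α) • (x - z)) (SA - (2 * α) • 1)
    (hvM y hyD) hpnorm hentry
  have hff := hmf y hyD x hxD (by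
    rw [norm_sub_rev]
    exact hxy.trans_le ((min_le_right _ _).trans (min_le_right _ _)))
  have hff' := (abs_lt.1 hff).2
  have hγgap := mul_le_mul_of_nonneg_left hgap' hγ.le
  have hγm : 0 < γ * m := by positivity
  linarith

end Comparison

/-- uniqueness for the Dirichlet problem: under the monotonicity
assumptions of the comparison principle, the Dirichlet problem `F(u,Du,D²u) = f` in `Ω`,
`u = b` on `∂Ω`, admits at most one viscosity solution `u ∈ C⁰(Ω̄)`. -/
theorem stmt_18 {n : ℕ} (Ω : Set (EuclideanSpace ℝ (Fin n)))
    (hΩo : IsOpen Ω) (hΩb : Bornology.IsBounded Ω)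
    (F : ℝ × EuclideanSpace ℝ (Fin n) × Matrix (Fin n) (Fin n) ℝ → ℝ)
    (hFc : Continuous F)
    (hFell : ∀ r p X Y, Matrix.IsSymm X → Matrix.IsSymm Y → (Y - X).PosSemidef →
      F (r, p, X) ≤ F (r, p, Y))
    (γ : ℝ) (hγ : 0 < γ)
    (hFmono : ∀ r s p X, r ≤ s → F (s, p, X) + γ * (s - r) ≤ F (r, p, X))
    (f b : EuclideanSpace ℝ (Fin n) → ℝ)
    (hf : ContinuousOn f (closure Ω)) (hb : ContinuousOn b (closure Ω))
    (u v : EuclideanSpace ℝ (Fin n) → ℝ)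
    (hu : ContinuousOn u (closure Ω)) (hv : ContinuousOn v (closure Ω))
    (husub : ∀ x ∈ Ω, ∀ p X, J2plus Ω u x p X → f x ≤ F (u x, p, X))
    (husup : ∀ x ∈ Ω, ∀ p X, J2minus Ω u x p X → F (u x, p, X) ≤ f x)
    (hvsub : ∀ x ∈ Ω, ∀ p X, J2plus Ω v x p X → f x ≤ F (v x, p, X))
    (hvsup : ∀ x ∈ Ω, ∀ p X, J2minus Ω v x p X → F (v x, p, X) ≤ f x)
    (hub : ∀ x ∈ frontier Ω, u x = b x) (hvb : ∀ x ∈ frontier Ω, v x = b x) :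
    ∀ x ∈ closure Ω, u x = v x := by
  have huv : ∀ x ∈ frontier Ω, u x = v x := fun x hx => (hub x hx).trans (hvb x hx).symm
  intro x hx
  exact le_antisymm
    (comparison Ω hΩo hΩb F hFc hFell γ hγ hFmono f u v hf hu hv husub hvsup huv x hx)
    (comparison Ω hΩo hΩb F hFc hFell γ hγ hFmono f v u hf hv hu hvsub husup
      (fun x hx => (huv x hx).symm) x hx)

end
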